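/- arXiv:math/0405163 — 5 statements merged into one kernel-verified Lean document; each statement's English description precedes it below -/
import Mathlib

section
/- Let C be a nonempty closed convex subset of a Banach space E, let T be a nonexpansive mapping on C, and suppose that T satisfies condition (C5), i.e., there exists λ > 0 such that for each x₁ ∈ C there exists η > 0 satisfying ‖Tx₁ − Ty‖ ≤ ‖x₁ − y‖ − λ for all y ∈ C with ‖y‖ > η. Then inf { ‖Tx − x‖ : x ∈ C } = 0. -/
/-!
Fix a centre `p` of the star-convex set `C` and `0 < t ≤ 1`. The map `x ↦ t • p + (1 - t) • T x` is
a contraction of `C`, so by Picard iteration it moves some `x ∈ C` by less than `t`. As `t → 0`,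
either these points `x` stay bounded, and then `T x - x ≈ t • (T x - p)` tends to `0`, or they
escape to infinity. In the latter case `x` lies almost between any given `u ∈ C` and `T x`, and
feeding this into (C5) gives `‖T x - x‖ ≤ ‖T u - u‖ - λ` up to an error `O(t)`. Hence the minimal
displacement `d` satisfies `d ≤ max 0 (‖T u - u‖ - λ)` for all `u ∈ C`, which forces `d = 0`.
-/

open scoped NNReal

theorem exists_dist_apply_lt_of_lipschitzWith {X : Type*} [PseudoMetricSpace X] [Nonempty X]
    {K : ℝ≥0} (hK : K < 1) {f : X → X} (hf : LipschitzWith K f) {δ : ℝ} (hδ : 0 < δ) :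
    ∃ x, dist x (f x) < δ := by
  obtain ⟨x₀⟩ := ‹Nonempty X›
  have hgeom : Filter.Tendsto (fun n : ℕ ↦ dist x₀ (f x₀) * (K : ℝ) ^ n) Filter.atTop (nhds 0) := by
    simpa using (tendsto_pow_atTop_nhds_zero_of_lt_one K.coe_nonneg hK).const_mul (dist x₀ (f x₀))
  obtain ⟨n, hn⟩ := (hgeom.eventually_lt_const hδ).exists
  refine ⟨f^[n] x₀, ?_⟩
  rw [← Function.iterate_succ_apply' f n x₀]
  exact (hf.dist_iterate_succ_le_geometric x₀ n).trans_lt hn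

section Displacement

variable {E : Type*} [SeminormedAddCommGroup E]

/-- The minimal displacement of `T` on `C` of metric fixed point theory. It is a real infimum, so
it is `0` by convention when `C` is empty. -/
noncomputable def minimalDisplacement (T : E → E) (C : Set E) : ℝ :=
  sInf ((fun x ↦ ‖T x - x‖) '' C)

/-- Condition (C5): away from a ball depending on `x₁`, the map `T` decreases the distance to `x₁`
by an amount `lam` that is uniform in `x₁`. -/
def ConditionC5 (T : E → E) (C : Set E) : Prop :=
  ∃ lam > (0 : ℝ), ∀ x₁ ∈ C, ∃ η > (0 : ℝ),
    ∀ y ∈ C, η < ‖y‖ → ‖T x₁ - T y‖ ≤ ‖x₁ - y‖ - lam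

variable {T : E → E} {C : Set E}

theorem minimalDisplacement_nonneg : 0 ≤ minimalDisplacement T C :=
  Real.sInf_nonneg <| Set.forall_mem_image.2 fun _ _ ↦ norm_nonneg _

theorem minimalDisplacement_le {x : E} (hx : x ∈ C) : minimalDisplacement T C ≤ ‖T x - x‖ :=
  csInf_le ⟨0, Set.forall_mem_image.2 fun _ _ ↦ norm_nonneg _⟩ (Set.mem_image_of_mem _ hx)

theorem exists_norm_apply_sub_self_lt (hC : C.Nonempty) {r : ℝ}
    (hr : minimalDisplacement T C < r) : ∃ x ∈ C, ‖T x - x‖ < r := by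
  simpa using exists_lt_of_csInf_lt (hC.image _) hr

end Displacement

section StarConvex

variable {E : Type*} [SeminormedAddCommGroup E] [NormedSpace ℝ E]

theorem norm_sub_le_mul_add_norm_sub_convexComb (x y p : E) {t : ℝ} (ht : 0 ≤ t) :
    ‖y - x‖ ≤ t * ‖y - p‖ + ‖x - (t • p + (1 - t) • y)‖ := by
  calc ‖y - x‖ = ‖t • (y - p) - (x - (t • p + (1 - t) • y))‖ := by congr 1; module
    _ ≤ ‖t • (y - p)‖ + ‖x - (t • p + (1 - t) • y)‖ := norm_sub_le _ _
    _ = t * ‖y - p‖ + ‖x - (t • p + (1 - t) • y)‖ := by rw [norm_smul, Real.norm_of_nonneg ht]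

theorem norm_sub_add_norm_sub_le_of_convexComb (x y p u : E) {t : ℝ} (ht : 0 ≤ t) (ht1 : t ≤ 1) :
    ‖y - x‖ + ‖x - u‖ ≤
      ‖y - u‖ + 2 * (t * ‖p - u‖ + ‖x - (t • p + (1 - t) • y)‖) := by
  set z := t • p + (1 - t) • y
  have hyx : ‖y - x‖ ≤ t * ‖y - p‖ + ‖x - z‖ := norm_sub_le_mul_add_norm_sub_convexComb x y p ht
  have hyp : t * ‖y - p‖ ≤ t * ‖y - u‖ + t * ‖p - u‖ := by
    rw [← mul_add, norm_sub_rev p u]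
    gcongr
    exact norm_sub_le_norm_sub_add_norm_sub y u p
  have hxu : ‖x - u‖ ≤ ‖x - z‖ + (t * ‖p - u‖ + (1 - t) * ‖y - u‖) := by
    calc ‖x - u‖ = ‖(x - z) + (t • (p - u) + (1 - t) • (y - u))‖ := by congr 1; module
      _ ≤ ‖x - z‖ + (‖t • (p - u)‖ + ‖(1 - t) • (y - u)‖) :=
        norm_add_le_of_le le_rfl (norm_add_le _ _)
      _ = ‖x - z‖ + (t * ‖p - u‖ + (1 - t) * ‖y - u‖) := by
        rw [norm_smul, norm_smul, Real.norm_of_nonneg ht, Real.norm_of_nonneg (sub_nonneg.2 ht1)]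
  linarith

theorem norm_apply_sub_self_le_of_norm_map_sub_le {T : E → E} {x p : E} {t : ℝ} (ht : 0 ≤ t)
    (hT : ‖T x - T p‖ ≤ ‖x - p‖) :
    ‖T x - x‖ ≤ t * (‖x - p‖ + ‖T p - p‖) + ‖x - (t • p + (1 - t) • T x)‖ := by
  have hTxp : ‖T x - p‖ ≤ ‖x - p‖ + ‖T p - p‖ :=
    (norm_sub_le_norm_sub_add_norm_sub _ (T p) _).trans (by gcongr)
  calc ‖T x - x‖ ≤ t * ‖T x - p‖ + ‖x - (t • p + (1 - t) • T x)‖ :=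
        norm_sub_le_mul_add_norm_sub_convexComb _ _ _ ht
    _ ≤ t * (‖x - p‖ + ‖T p - p‖) + ‖x - (t • p + (1 - t) • T x)‖ := by gcongr

theorem norm_apply_sub_self_le_of_norm_map_sub_le_sub {T : E → E} {x u : E} {lam : ℝ} (p : E)
    {t : ℝ} (ht : 0 ≤ t) (ht1 : t ≤ 1) (hT : ‖T u - T x‖ ≤ ‖u - x‖ - lam) :
    ‖T x - x‖ ≤
      ‖T u - u‖ - lam + 2 * (t * ‖p - u‖ + ‖x - (t • p + (1 - t) • T x)‖) := by
  have hbetween := norm_sub_add_norm_sub_le_of_convexComb x (T x) p u ht ht1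
  have htriangle := norm_sub_le_norm_sub_add_norm_sub (T x) (T u) u
  rw [norm_sub_rev (T u), norm_sub_rev u] at hT
  linarith

variable {T : E → E} {C : Set E} {p : E}

theorem exists_norm_sub_convexComb_lt (hCst : StarConvex ℝ p C) (hp : p ∈ C)
    (hTC : Set.MapsTo T C C) (hT : LipschitzOnWith 1 T C) {t : ℝ} (ht : 0 < t) (ht1 : t ≤ 1)
    {δ : ℝ} (hδ : 0 < δ) : ∃ x ∈ C, ‖x - (t • p + (1 - t) • T x)‖ < δ := by
  have hmaps : Set.MapsTo (fun x ↦ t • p + (1 - t) • T x) C C := fun x hx ↦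
    hCst (hTC hx) ht.le (sub_nonneg.2 ht1) (add_sub_cancel _ _)
  have hlip : LipschitzOnWith ‖1 - t‖₊ (fun x ↦ t • p + (1 - t) • T x) C := by
    simpa using (LipschitzWith.const (t • p)).lipschitzOnWith.add
      ((lipschitzWith_smul (1 - t)).comp_lipschitzOnWith hT)
  have hcontr : ‖1 - t‖₊ < 1 := by
    rw [← NNReal.coe_lt_one, coe_nnnorm, Real.norm_of_nonneg (sub_nonneg.2 ht1)]
    exact sub_lt_self 1 ht
  have : Nonempty C := ⟨⟨p, hp⟩⟩
  obtain ⟨⟨x, hx⟩, hdist⟩ :=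
    exists_dist_apply_lt_of_lipschitzWith hcontr (hlip.mapsToRestrict hmaps) hδ
  exact ⟨x, hx, by
    simpa only [Subtype.dist_eq, Set.MapsTo.val_restrict_apply, dist_eq_norm] using hdist⟩

theorem exists_norm_apply_sub_self_le (hCst : StarConvex ℝ p C) (hp : p ∈ C)
    (hTC : Set.MapsTo T C C) (hT : LipschitzOnWith 1 T C) {u : E} {lam η : ℝ}
    (hfar : ∀ y ∈ C, η < ‖y‖ → ‖T u - T y‖ ≤ ‖u - y‖ - lam) {ε : ℝ} (hε : 0 < ε) :
    ∃ x ∈ C, ‖T x - x‖ ≤ max 0 (‖T u - u‖ - lam) + ε := by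
  set M := max (η + ‖p‖ + ‖T p - p‖ + 1) (2 * (‖p - u‖ + 1))
  have hM : 0 < M := lt_max_of_lt_right (by positivity)
  obtain ⟨t, ht, ht1, htM⟩ : ∃ t > 0, t ≤ 1 ∧ t * M ≤ ε :=
    ⟨min 1 (ε / M), lt_min one_pos (div_pos hε hM), min_le_left _ _,
      (le_div_iff₀ hM).1 (min_le_right _ _)⟩
  obtain ⟨x, hx, hxt⟩ := exists_norm_sub_convexComb_lt hCst hp hTC hT ht ht1 ht
  refine ⟨x, hx, ?_⟩
  rcases le_or_gt ‖x‖ η with hη | hη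
  · have hTxp : ‖T x - T p‖ ≤ ‖x - p‖ := by simpa using hT.norm_sub_le hx hp
    calc ‖T x - x‖ ≤ t * (‖x - p‖ + ‖T p - p‖) + ‖x - (t • p + (1 - t) • T x)‖ :=
          norm_apply_sub_self_le_of_norm_map_sub_le ht.le hTxp
      _ ≤ t * (η + ‖p‖ + ‖T p - p‖) + t := by gcongr; exact norm_sub_le_of_le hη le_rfl
      _ = t * (η + ‖p‖ + ‖T p - p‖ + 1) := by ring
      _ ≤ t * M := by gcongr; exact le_max_left _ _
      _ ≤ max 0 (‖T u - u‖ - lam) + ε := le_add_of_nonneg_of_le (le_max_left _ _) htM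
  · calc ‖T x - x‖
        ≤ ‖T u - u‖ - lam + 2 * (t * ‖p - u‖ + ‖x - (t • p + (1 - t) • T x)‖) :=
          norm_apply_sub_self_le_of_norm_map_sub_le_sub p ht.le ht1 (hfar x hx hη)
      _ ≤ ‖T u - u‖ - lam + 2 * (t * ‖p - u‖ + t) := by gcongr
      _ = ‖T u - u‖ - lam + t * (2 * (‖p - u‖ + 1)) := by ring
      _ ≤ ‖T u - u‖ - lam + t * M := by gcongr; exact le_max_right _ _
      _ ≤ max 0 (‖T u - u‖ - lam) + ε := add_le_add (le_max_right _ _) htM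

theorem minimalDisplacement_le_max (hCst : StarConvex ℝ p C) (hp : p ∈ C)
    (hTC : Set.MapsTo T C C) (hT : LipschitzOnWith 1 T C) {u : E} {lam η : ℝ}
    (hfar : ∀ y ∈ C, η < ‖y‖ → ‖T u - T y‖ ≤ ‖u - y‖ - lam) :
    minimalDisplacement T C ≤ max 0 (‖T u - u‖ - lam) := by
  refine le_of_forall_pos_le_add fun ε hε ↦ ?_
  obtain ⟨x, hx, hle⟩ := exists_norm_apply_sub_self_le hCst hp hTC hT hfar hε
  exact (minimalDisplacement_le hx).trans hle

theorem c5_implies_inf_displacement_zero_general (hCst : StarConvex ℝ p C) (hp : p ∈ C)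
    (hTC : Set.MapsTo T C C) (hT : LipschitzOnWith 1 T C) (hC5 : ConditionC5 T C) :
    minimalDisplacement T C = 0 := by
  obtain ⟨lam, hlam, hC5⟩ := hC5
  refine le_antisymm (not_lt.1 fun hpos ↦ ?_) minimalDisplacement_nonneg
  obtain ⟨u, hu, hlt⟩ := exists_norm_apply_sub_self_lt ⟨p, hp⟩
    (lt_add_of_pos_right (minimalDisplacement T C) hlam)
  obtain ⟨η, -, hfar⟩ := hC5 u hu
  have hle := minimalDisplacement_le_max hCst hp hTC hT hfar
  exact hle.not_gt (max_lt hpos (sub_lt_iff_lt_add.2 hlt))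

end StarConvex

/-- If a nonexpansive mapping `T` on a nonempty closed convex subset `C` of a Banach
space satisfies condition (C5), then `inf { ‖Tx − x‖ : x ∈ C } = 0`. -/
theorem c5_implies_inf_displacement_zero
    {E : Type*} [NormedAddCommGroup E] [NormedSpace ℝ E] [CompleteSpace E]
    (C : Set E) (hCne : C.Nonempty) (hCcl : IsClosed C) (hCcv : Convex ℝ C)
    (T : E → E) (hTC : Set.MapsTo T C C)
    (hTne : ∀ x ∈ C, ∀ y ∈ C, ‖T x - T y‖ ≤ ‖x - y‖)
    (hC5 : ∃ lam > (0 : ℝ), ∀ x₁ ∈ C, ∃ η > (0 : ℝ),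
      ∀ y ∈ C, η < ‖y‖ → ‖T x₁ - T y‖ ≤ ‖x₁ - y‖ - lam) :
    sInf ((fun x => ‖T x - x‖) '' C) = 0 := by
  obtain ⟨p, hp⟩ := hCne
  exact c5_implies_inf_displacement_zero_general (hCcv hp) hp hTC
    (.of_dist_le_mul (by simpa [dist_eq_norm] using hTne)) hC5
end

section
/- Let C be a nonempty unbounded closed convex subset of a Banach space E and let T be a nonexpansive mapping on C. Then the condition that for every x₁ ∈ C the limsup of ‖Tx₁ − Ty‖ / ‖x₁ − y‖, taken over y ∈ C as ‖y‖ → ∞, is strictly less than 1, holds if and only if T satisfies condition (C1). -/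
open Filter

/-!
The triangle inequality at two base points `x₀`, `x₁` costs only a bounded error, which is
negligible compared with `dist x₁ y` once `y` is far away. Hence a contraction ratio `s` at
infinity seen from a single point `x₀` gives every ratio `r > s` at infinity seen from any other
point, so the ratio in (C1) can be chosen uniformly.
-/

section Limsup

variable {α β : Type*} [ConditionallyCompleteLinearOrder β] [DenselyOrdered β]

theorem limsup_lt_iff_exists_eventually_le {l : Filter α} {f : α → β} {c : β}
    (hcobdd : l.IsCoboundedUnder (· ≤ ·) f) (hbdd : l.IsBoundedUnder (· ≤ ·) f) :
    limsup f l < c ↔ ∃ r < c, ∀ᶠ a in l, f a ≤ r := by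
  constructor
  · intro h
    obtain ⟨r, hr, hrc⟩ := exists_between h
    exact ⟨r, hrc, (eventually_lt_of_limsup_lt hr hbdd).mono fun _ => le_of_lt⟩
  · rintro ⟨r, hrc, hr⟩
    exact (limsup_le_of_le hcobdd hr).trans_lt hrc

end Limsup

section Cobounded

open Bornology

theorem neBot_cobounded_inf_principal_iff {X : Type*} [Bornology X] {C : Set X} :
    (cobounded X ⊓ 𝓟 C).NeBot ↔ ¬ IsBounded C := by
  rw [neBot_iff, ne_eq, ← disjoint_iff, disjoint_principal_right, ← isBounded_def]

theorem eventually_cobounded_inf_principal_iff_norm {E : Type*} [SeminormedAddGroup E] {C : Set E}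
    {p : E → Prop} :
    (∀ᶠ y in cobounded E ⊓ 𝓟 C, p y) ↔ ∃ η > (0 : ℝ), ∀ y ∈ C, η < ‖y‖ → p y := by
  rw [eventually_inf_principal, ← comap_norm_atTop,
    ((atTop_basis_Ioi' (0 : ℝ)).comap norm).eventually_iff]
  exact exists_congr fun η => and_congr_right fun _ => forall_congr' fun y => forall_comm

end Cobounded

section DistanceRatio

open Bornology

variable {X Y : Type*} [PseudoMetricSpace X] [PseudoMetricSpace Y] {T : X → Y} {l : Filter X}

theorem eventually_dist_div_dist_le_iff (hl : l ≤ cobounded X) {x : X} {r : ℝ} :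
    (∀ᶠ y in l, dist (T x) (T y) / dist x y ≤ r) ↔
      ∀ᶠ y in l, dist (T x) (T y) ≤ r * dist x y := by
  have hpos : ∀ᶠ y in l, 0 < dist x y :=
    ((Metric.tendsto_dist_left_cobounded_atTop x).mono_left hl).eventually_gt_atTop 0
  exact eventually_congr (hpos.mono fun y hy => div_le_iff₀ hy)

theorem eventually_dist_le_mul_dist_of_lt (hl : l ≤ cobounded X) {x₀ : X} (x₁ : X) {s r : ℝ}
    (hsr : s < r) (h : ∀ᶠ y in l, dist (T x₀) (T y) ≤ s * dist x₀ y) :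
    ∀ᶠ y in l, dist (T x₁) (T y) ≤ r * dist x₁ y := by
  set D := dist (T x₁) (T x₀) + |s| * dist x₀ x₁
  have hfar : ∀ᶠ y in l, D / (r - s) ≤ dist x₁ y :=
    ((Metric.tendsto_dist_left_cobounded_atTop x₁).mono_left hl).eventually_ge_atTop _
  filter_upwards [h, hfar] with y hy hDy
  have hD : D ≤ dist x₁ y * (r - s) := (div_le_iff₀ (sub_pos.2 hsr)).1 hDy
  have hbase : s * dist x₀ y - s * dist x₁ y ≤ |s| * dist x₀ x₁ :=
    calc s * dist x₀ y - s * dist x₁ y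
        ≤ |s * (dist x₀ y - dist x₁ y)| := by rw [← mul_sub]; exact le_abs_self _
      _ ≤ |s| * dist x₀ x₁ := by
        rw [abs_mul]
        gcongr
        exact abs_dist_sub_le x₀ x₁ y
  calc dist (T x₁) (T y)
      ≤ dist (T x₁) (T x₀) + dist (T x₀) (T y) := dist_triangle _ _ _
    _ ≤ D + s * dist x₁ y := by linarith
    _ ≤ r * dist x₁ y := by linarith

theorem isBoundedUnder_le_dist_div_dist_of_lipschitzOnWith {K : NNReal} {C : Set X}
    (hT : LipschitzOnWith K T C) (hl : l ≤ 𝓟 C) {x : X} (hx : x ∈ C) :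
    l.IsBoundedUnder (· ≤ ·) fun y => dist (T x) (T y) / dist x y := by
  have hmem : ∀ᶠ y in l, y ∈ C := le_principal_iff.1 hl
  exact isBoundedUnder_of_eventually_le (a := (K : ℝ)) <| hmem.mono fun y hy =>
    div_le_of_le_mul₀ dist_nonneg K.2 (hT.dist_le_mul x hx y hy)

theorem limsup_dist_div_dist_lt_iff [l.NeBot] {K : NNReal} {C : Set X}
    (hT : LipschitzOnWith K T C) (hl : l ≤ cobounded X ⊓ 𝓟 C) {x : X} (hx : x ∈ C) {c : ℝ} :
    limsup (fun y => dist (T x) (T y) / dist x y) l < c ↔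
      ∃ r < c, ∀ᶠ y in l, dist (T x) (T y) ≤ r * dist x y := by
  have hcobdd : l.IsCoboundedUnder (· ≤ ·) fun y => dist (T x) (T y) / dist x y :=
    (isBoundedUnder_of_eventually_ge (a := 0) <|
      Eventually.of_forall fun y => by positivity).isCoboundedUnder_le
  rw [limsup_lt_iff_exists_eventually_le hcobdd
    (isBoundedUnder_le_dist_div_dist_of_lipschitzOnWith hT (hl.trans inf_le_right) hx)]
  simp only [eventually_dist_div_dist_le_iff (hl.trans inf_le_left)]

theorem limsup_lt_one_forall_iff_c1_general {K : NNReal} {C : Set X} (hC : ¬ IsBounded C)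
    (hT : LipschitzOnWith K T C) :
    (∀ x ∈ C, limsup (fun y => dist (T x) (T y) / dist x y) (cobounded X ⊓ 𝓟 C) < 1) ↔
      ∃ r ∈ Set.Ioo (0 : ℝ) 1, ∀ x ∈ C,
        ∀ᶠ y in cobounded X ⊓ 𝓟 C, dist (T x) (T y) ≤ r * dist x y := by
  have : (cobounded X ⊓ 𝓟 C).NeBot := neBot_cobounded_inf_principal_iff.2 hC
  constructor
  · intro h
    obtain ⟨x₀, hx₀⟩ : C.Nonempty := nonempty_of_not_isBounded hC
    obtain ⟨s, hs, hcontr⟩ := (limsup_dist_div_dist_lt_iff hT le_rfl hx₀).1 (h x₀ hx₀)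
    obtain ⟨r, hr, hr_one⟩ := exists_between (max_lt hs one_pos)
    obtain ⟨hsr, hr_pos⟩ := max_lt_iff.1 hr
    exact ⟨r, ⟨hr_pos, hr_one⟩, fun x _ =>
      eventually_dist_le_mul_dist_of_lt inf_le_left x hsr hcontr⟩
  · rintro ⟨r, ⟨-, hr_one⟩, hcontr⟩ x hx
    exact (limsup_dist_div_dist_lt_iff hT le_rfl hx).2 ⟨r, hr_one, hcontr x hx⟩

end DistanceRatio

/-- On a nonempty unbounded closed convex subset of a Banach space, a nonexpansive
mapping satisfies `limsup_{y ∈ C, ‖y‖ → ∞} ‖Tx₁ − Ty‖ / ‖x₁ − y‖ < 1` for every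
`x₁ ∈ C` iff it satisfies (C1). -/
theorem limsup_lt_one_forall_iff_c1
    {E : Type*} [NormedAddCommGroup E] [NormedSpace ℝ E] [CompleteSpace E]
    (C : Set E) (hCne : C.Nonempty) (hCub : ¬ Bornology.IsBounded C)
    (hCcl : IsClosed C) (hCcv : Convex ℝ C)
    (T : E → E) (hTC : Set.MapsTo T C C)
    (hTne : ∀ x ∈ C, ∀ y ∈ C, ‖T x - T y‖ ≤ ‖x - y‖) :
    (∀ x₁ ∈ C, Filter.limsup (fun y => ‖T x₁ - T y‖ / ‖x₁ - y‖)
        ((Filter.comap norm Filter.atTop) ⊓ Filter.principal C) < 1) ↔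
      (∃ r ∈ Set.Ioo (0 : ℝ) 1, ∀ x₁ ∈ C, ∃ η > (0 : ℝ),
        ∀ y ∈ C, η < ‖y‖ → ‖T x₁ - T y‖ ≤ r * ‖x₁ - y‖) := by
  simp only [← dist_eq_norm, comap_norm_atTop, ← eventually_cobounded_inf_principal_iff_norm]
    at hTne ⊢
  exact limsup_lt_one_forall_iff_c1_general hCub (LipschitzOnWith.mk_one hTne)
end

section
/- Let C be a nonempty closed convex subset of a Banach space E. Assume that C is locally weakly compact and has the weak fixed point property for nonexpansive mappings (WFPP). Let T be a nonexpansive mapping on C. Then T has a fixed point in C if and only if T satisfies condition (C6). -/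
/-!
Condition (C6) at `x₀` says that far from the origin `T` brings points closer to `T x₀` by at least
`‖T x₀ - x₀‖`, which pays for the displacement of the centre in the triangle inequality
`‖T y - x₀‖ ≤ ‖T y - T x₀‖ + ‖T x₀ - x₀‖`. Hence `T` preserves the intersection of `C` with a large
ball around `x₀`, and this intersection is weakly compact. Conversely, at a fixed point `x₀`
condition (C6) is nonexpansiveness itself.
-/

open Function Metric Set

theorem mapsTo_inter_closedBall_of_dist_le_sub {X : Type*} [PseudoMetricSpace X]
    {f : X → X} {s : Set X} {x₀ : X} {r : ℝ} (hfs : MapsTo f s s)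
    (hf : ∀ y ∈ s, dist (f y) (f x₀) ≤ dist y x₀)
    (hfar : ∀ y ∈ s, r < dist y x₀ → dist (f y) (f x₀) ≤ dist y x₀ - dist (f x₀) x₀) :
    MapsTo f (s ∩ closedBall x₀ (r + dist (f x₀) x₀))
      (s ∩ closedBall x₀ (r + dist (f x₀) x₀)) := by
  rintro y ⟨hys, hyR⟩
  refine ⟨hfs hys, ?_⟩
  rw [mem_closedBall] at hyR ⊢
  have htri : dist (f y) x₀ ≤ dist (f y) (f x₀) + dist (f x₀) x₀ := dist_triangle _ _ _
  rcases lt_or_ge r (dist y x₀) with hy | hy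
  · linarith [hfar y hys hy]
  · linarith [hf y hys]

theorem lipschitzOnWith_one_iff_norm_sub_le {E F : Type*} [SeminormedAddCommGroup E]
    [SeminormedAddCommGroup F] {f : E → F} {s : Set E} :
    LipschitzOnWith 1 f s ↔ ∀ x ∈ s, ∀ y ∈ s, ‖f x - f y‖ ≤ ‖x - y‖ := by
  simp only [lipschitzOnWith_iff_norm_sub_le, NNReal.coe_one, one_mul]

section ConditionC6

variable {E : Type*} [SeminormedAddCommGroup E] {C : Set E} {T : E → E}

/-- Condition (C6) for a mapping `T` on `C`; the mapping is encoded as a total function of which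
only the values on `C` matter. -/
def ConditionC6 (T : E → E) (C : Set E) : Prop :=
  ∃ x₀ ∈ C, ∃ η > (0 : ℝ),
    ∀ y ∈ C, η < ‖y‖ → ‖T x₀ - T y‖ ≤ ‖x₀ - y‖ - ‖T x₀ - x₀‖

theorem conditionC6_of_isFixedPt (hT : LipschitzOnWith 1 T C) {z : E} (hz : z ∈ C)
    (hfix : IsFixedPt T z) : ConditionC6 T C := by
  refine ⟨z, hz, 1, one_pos, fun y hy _ ↦ ?_⟩
  calc ‖T z - T y‖ ≤ ‖z - y‖ := lipschitzOnWith_one_iff_norm_sub_le.1 hT z hz y hy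
    _ = ‖z - y‖ - ‖T z - z‖ := by rw [hfix.eq, sub_self z, norm_zero, sub_zero]

theorem ConditionC6.exists_mapsTo_inter_closedBall (hC6 : ConditionC6 T C) (hTC : MapsTo T C C)
    (hT : LipschitzOnWith 1 T C) :
    ∃ x₀ ∈ C, ∃ R : ℝ, 0 ≤ R ∧ MapsTo T (C ∩ closedBall x₀ R) (C ∩ closedBall x₀ R) := by
  obtain ⟨x₀, hx₀, η, hη, hfar⟩ := hC6
  refine ⟨x₀, hx₀, η + ‖x₀‖ + dist (T x₀) x₀, by positivity,
    mapsTo_inter_closedBall_of_dist_le_sub hTC (fun y hy ↦ ?_) fun y hy hyr ↦ ?_⟩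
  · simpa only [dist_eq_norm] using lipschitzOnWith_one_iff_norm_sub_le.1 hT y hy x₀ hx₀
  · have hη_lt : η < ‖y‖ := by linarith [dist_le_norm_add_norm y x₀]
    simpa only [dist_eq_norm, norm_sub_rev (T y), norm_sub_rev y] using hfar y hy hη_lt

end ConditionC6

section WeakFixedPointProperty

variable {E : Type*} [NormedAddCommGroup E] [NormedSpace ℝ E] {C D : Set E} {T : E → E}

/-- Local weak compactness of `C`: every bounded closed convex subset of `C` is weakly compact.
Weak compactness is compactness of the image in the type synonym `WeakSpace ℝ E`. -/
def IsLocallyWeaklyCompact (C : Set E) : Prop :=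
  ∀ D ⊆ C, Bornology.IsBounded D → IsClosed D → Convex ℝ D → IsCompact (toWeakSpace ℝ E '' D)

/-- The weak fixed point property (WFPP) of `C` for nonexpansive mappings, which are encoded as
total functions that are `1`-Lipschitz on their domain `D` and map it to itself. -/
def HasWeakFixedPointProperty (C : Set E) : Prop :=
  ∀ D ⊆ C, D.Nonempty → IsCompact (toWeakSpace ℝ E '' D) → Convex ℝ D →
    ∀ S : E → E, MapsTo S D D → LipschitzOnWith 1 S D → ∃ z ∈ D, IsFixedPt S z

theorem HasWeakFixedPointProperty.exists_isFixedPt_of_isBounded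
    (hWFPP : HasWeakFixedPointProperty C) (hLWC : IsLocallyWeaklyCompact C) (hDC : D ⊆ C)
    (hDne : D.Nonempty) (hDb : Bornology.IsBounded D) (hDcl : IsClosed D) (hDcv : Convex ℝ D)
    (hTD : MapsTo T D D) (hT : LipschitzOnWith 1 T D) : ∃ z ∈ D, IsFixedPt T z :=
  hWFPP D hDC hDne (hLWC D hDC hDb hDcl hDcv) hDcv T hTD hT

theorem fixedPoint_iff_c6_of_wfpp_general (hCcl : IsClosed C) (hCcv : Convex ℝ C)
    (hLWC : IsLocallyWeaklyCompact C) (hWFPP : HasWeakFixedPointProperty C)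
    (hTC : MapsTo T C C) (hT : LipschitzOnWith 1 T C) :
    (∃ z ∈ C, IsFixedPt T z) ↔ ConditionC6 T C := by
  refine ⟨fun ⟨z, hz, hfix⟩ ↦ conditionC6_of_isFixedPt hT hz hfix, fun hC6 ↦ ?_⟩
  obtain ⟨x₀, hx₀, R, hR, hTball⟩ := hC6.exists_mapsTo_inter_closedBall hTC hT
  obtain ⟨z, hz, hfix⟩ := hWFPP.exists_isFixedPt_of_isBounded hLWC inter_subset_left
    ⟨x₀, hx₀, mem_closedBall_self hR⟩ (isBounded_closedBall.subset inter_subset_right)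
    (hCcl.inter isClosed_closedBall) (hCcv.inter (convex_closedBall x₀ R)) hTball
    (hT.mono inter_subset_left)
  exact ⟨z, hz.1, hfix⟩

end WeakFixedPointProperty

/-- Proposition 4: if a nonempty closed convex subset `C` of a Banach space is locally
weakly compact and has the weak fixed point property for nonexpansive mappings, then a
nonexpansive mapping `T` on `C` has a fixed point iff it satisfies (C6). -/
theorem fixedPoint_iff_c6_of_wfpp
    {E : Type*} [NormedAddCommGroup E] [NormedSpace ℝ E] [CompleteSpace E]
    (C : Set E) (hCne : C.Nonempty) (hCcl : IsClosed C) (hCcv : Convex ℝ C)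
    (hLWC : ∀ D : Set E, D ⊆ C → Bornology.IsBounded D → IsClosed D → Convex ℝ D →
      IsCompact (toWeakSpace ℝ E '' D))
    (hWFPP : ∀ D : Set E, D ⊆ C → D.Nonempty → IsCompact (toWeakSpace ℝ E '' D) →
      Convex ℝ D → ∀ S : E → E, Set.MapsTo S D D →
      (∀ x ∈ D, ∀ y ∈ D, ‖S x - S y‖ ≤ ‖x - y‖) → ∃ z ∈ D, S z = z)
    (T : E → E) (hTC : Set.MapsTo T C C)
    (hTne : ∀ x ∈ C, ∀ y ∈ C, ‖T x - T y‖ ≤ ‖x - y‖) :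
    (∃ z ∈ C, T z = z) ↔
      (∃ x₀ ∈ C, ∃ η > (0 : ℝ),
        ∀ y ∈ C, η < ‖y‖ → ‖T x₀ - T y‖ ≤ ‖x₀ - y‖ - ‖T x₀ - x₀‖) :=
  fixedPoint_iff_c6_of_wfpp_general hCcl hCcv hLWC
    (by simpa only [HasWeakFixedPointProperty, IsFixedPt, lipschitzOnWith_one_iff_norm_sub_le]
      using hWFPP)
    hTC (lipschitzOnWith_one_iff_norm_sub_le.2 hTne)
end

section
/- Let C be a nonempty unbounded closed convex subset of a Banach space E, assume C has the fixed point property for nonexpansive mappings (FPP), and let T be a nonexpansive mapping on C which is asymptotically contractive. Then T has a fixed point. -/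
open Filter

/-!
Off a large ball around `x₀`, `T` shrinks distances to `x₀` by a factor `c < 1`; inside it the
Lipschitz bound keeps the image bounded. Hence `dist (T x₀) (T y) ≤ c * dist x₀ y + b` on all of
`C`, so `T` preserves `C ∩ closedBall x₀ r` as soon as `r ≥ (dist x₀ (T x₀) + b) / (1 - c)`, and the
fixed point property applies to this bounded closed convex set.
-/

section PseudoMetricSpace

open Bornology Metric Set
open scoped NNReal

variable {X Y : Type*} [PseudoMetricSpace X] [PseudoMetricSpace Y] {C : Set X} {x₀ : X}
  {K : ℝ≥0} {b c : ℝ}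

/-- `T` is asymptotically contractive on `C`: seen from some base point of `C`, it shrinks the
distance to the far points of `C` by a factor less than `1`. The limit `‖y‖ → ∞` is encoded by the
cobounded filter. The real-valued `limsup` is meaningful when the ratio is bounded, as for Lipschitz
`T`; for bounded `C` the filter is `⊥`, the `limsup` is `0` and the condition only says that `C` is
nonempty. -/
def IsAsymptoticallyContractiveOn (T : X → Y) (C : Set X) : Prop :=
  ∃ x₀ ∈ C, limsup (fun y => dist (T x₀) (T y) / dist x₀ y) (cobounded X ⊓ 𝓟 C) < 1

theorem lipschitzOnWith_one_iff_dist_le {T : X → Y} :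
    LipschitzOnWith 1 T C ↔ ∀ x ∈ C, ∀ y ∈ C, dist (T x) (T y) ≤ dist x y := by
  simp only [lipschitzOnWith_iff_dist_le_mul, NNReal.coe_one, one_mul]

theorem eventually_dist_le_mul_of_limsup_lt {T : X → Y}
    (hT : LipschitzOnWith K T C) (hx₀ : x₀ ∈ C)
    (hc : limsup (fun y => dist (T x₀) (T y) / dist x₀ y) (cobounded X ⊓ 𝓟 C) < c) :
    ∀ᶠ y in cobounded X ⊓ 𝓟 C, dist (T x₀) (T y) ≤ c * dist x₀ y := by
  have hmem : ∀ᶠ y in cobounded X ⊓ 𝓟 C, y ∈ C := mem_inf_of_right (mem_principal_self C)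
  have hbdd : IsBoundedUnder (· ≤ ·) (cobounded X ⊓ 𝓟 C)
      (fun y => dist (T x₀) (T y) / dist x₀ y) :=
    isBoundedUnder_of_eventually_le <| hmem.mono fun y hy =>
      div_le_of_le_mul₀ dist_nonneg K.coe_nonneg (hT.dist_le_mul x₀ hx₀ y hy)
  have hpos : ∀ᶠ y in cobounded X ⊓ 𝓟 C, 0 < dist x₀ y :=
    ((tendsto_dist_left_cobounded_atTop x₀).eventually_gt_atTop 0).filter_mono inf_le_left
  filter_upwards [eventually_lt_of_limsup_lt hc hbdd, hpos] with y hlt hy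
  exact ((div_lt_iff₀ hy).1 hlt).le

theorem exists_forall_dist_le_mul_add_of_eventually {T : X → Y}
    (hT : LipschitzOnWith K T C) (hx₀ : x₀ ∈ C) (hc : 0 ≤ c)
    (h : ∀ᶠ y in cobounded X ⊓ 𝓟 C, dist (T x₀) (T y) ≤ c * dist x₀ y) :
    ∃ b, ∀ y ∈ C, dist (T x₀) (T y) ≤ c * dist x₀ y + b := by
  rw [eventually_inf_principal, (hasBasis_cobounded_compl_closedBall x₀).eventually_iff] at h
  obtain ⟨R, -, hfar⟩ := h
  refine ⟨|K * R|, fun y hy => ?_⟩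
  by_cases hyR : y ∈ closedBall x₀ R
  · calc
      dist (T x₀) (T y) ≤ K * dist x₀ y := hT.dist_le_mul x₀ hx₀ y hy
      _ ≤ K * R := by gcongr; exact mem_closedBall'.1 hyR
      _ ≤ |K * R| := le_abs_self _
      _ ≤ c * dist x₀ y + |K * R| := le_add_of_nonneg_left (by positivity)
  · exact (hfar hyR hy).trans (le_add_of_nonneg_right (abs_nonneg _))

theorem IsAsymptoticallyContractiveOn.exists_forall_dist_le_mul_add {T : X → Y}
    (h : IsAsymptoticallyContractiveOn T C) (hT : LipschitzOnWith K T C) :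
    ∃ x₀ ∈ C, ∃ c ∈ Ico (0 : ℝ) 1, ∃ b, ∀ y ∈ C, dist (T x₀) (T y) ≤ c * dist x₀ y + b := by
  obtain ⟨x₀, hx₀, hlim⟩ := h
  obtain ⟨c, hc, hc1⟩ := exists_between (max_lt hlim one_pos)
  obtain ⟨hlimc, hc0⟩ := max_lt_iff.1 hc
  exact ⟨x₀, hx₀, c, ⟨hc0.le, hc1⟩, exists_forall_dist_le_mul_add_of_eventually hT hx₀ hc0.le
    (eventually_dist_le_mul_of_limsup_lt hT hx₀ hlimc)⟩

theorem eventually_mapsTo_inter_closedBall {T : X → X} (hTC : MapsTo T C C) (hc : c ∈ Ico 0 1)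
    (h : ∀ y ∈ C, dist (T x₀) (T y) ≤ c * dist x₀ y + b) :
    ∀ᶠ r in atTop, MapsTo T (C ∩ closedBall x₀ r) (C ∩ closedBall x₀ r) := by
  filter_upwards [eventually_ge_atTop ((dist x₀ (T x₀) + b) / (1 - c))]
    with r hr y ⟨hyC, hyr⟩
  refine ⟨hTC hyC, ?_⟩
  rw [mem_closedBall'] at hyr ⊢
  calc
    dist x₀ (T y) ≤ dist x₀ (T x₀) + dist (T x₀) (T y) := dist_triangle _ _ _
    _ ≤ dist x₀ (T x₀) + (c * dist x₀ y + b) := by gcongr; exact h y hyC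
    _ ≤ dist x₀ (T x₀) + (c * r + b) := by gcongr; exact hc.1
    _ ≤ r := by linarith [(div_le_iff₀ (sub_pos.2 hc.2)).1 hr]

end PseudoMetricSpace

section NormedSpace

open Bornology Function Metric Set

variable {E : Type*} [NormedAddCommGroup E] [NormedSpace ℝ E] {C : Set E}

/-- The fixed point property (FPP) for nonexpansive mappings. A self-map of a subset `D` of `C` is
encoded as a map `S : E → E` with `MapsTo S D D`, whose values off `D` are irrelevant. -/
def HasFixedPointProperty (C : Set E) : Prop :=
  ∀ D ⊆ C, D.Nonempty → IsBounded D → IsClosed D → Convex ℝ D →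
    ∀ S : E → E, MapsTo S D D → LipschitzOnWith 1 S D → ∃ z ∈ D, IsFixedPt S z

theorem fixedPoint_of_asymptotically_contractive_fpp_general (hCcl : IsClosed C)
    (hCcv : Convex ℝ C) (hFPP : HasFixedPointProperty C) {T : E → E} (hTC : MapsTo T C C)
    (hTne : LipschitzOnWith 1 T C) (hAC : IsAsymptoticallyContractiveOn T C) :
    ∃ z ∈ C, IsFixedPt T z := by
  obtain ⟨x₀, hx₀, c, hc, b, hT⟩ := hAC.exists_forall_dist_le_mul_add hTne
  obtain ⟨r, hTr, hr⟩ :=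
    ((eventually_mapsTo_inter_closedBall hTC hc hT).and (eventually_ge_atTop 0)).exists
  obtain ⟨z, hz, hTz⟩ := hFPP (C ∩ closedBall x₀ r) inter_subset_left
    ⟨x₀, hx₀, mem_closedBall_self hr⟩ (isBounded_closedBall.subset inter_subset_right)
    (hCcl.inter isClosed_closedBall) (hCcv.inter (convex_closedBall x₀ r)) T hTr
    (hTne.mono inter_subset_left)
  exact ⟨z, hz.1, hTz⟩

end NormedSpace

/-- Theorem 1 (i): a nonexpansive, asymptotically contractive mapping on a nonempty
unbounded closed convex subset of a Banach space with the fixed point property for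
nonexpansive mappings has a fixed point. -/
theorem fixedPoint_of_asymptotically_contractive_fpp
    {E : Type*} [NormedAddCommGroup E] [NormedSpace ℝ E] [CompleteSpace E]
    (C : Set E) (hCne : C.Nonempty) (hCub : ¬ Bornology.IsBounded C)
    (hCcl : IsClosed C) (hCcv : Convex ℝ C)
    (hFPP : ∀ D : Set E, D ⊆ C → D.Nonempty → Bornology.IsBounded D → IsClosed D →
      Convex ℝ D → ∀ S : E → E, Set.MapsTo S D D →
      (∀ x ∈ D, ∀ y ∈ D, ‖S x - S y‖ ≤ ‖x - y‖) → ∃ z ∈ D, S z = z)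
    (T : E → E) (hTC : Set.MapsTo T C C)
    (hTne : ∀ x ∈ C, ∀ y ∈ C, ‖T x - T y‖ ≤ ‖x - y‖)
    (hAC : ∃ x₀ ∈ C, Filter.limsup (fun y => ‖T x₀ - T y‖ / ‖x₀ - y‖)
      ((Filter.comap norm Filter.atTop) ⊓ Filter.principal C) < 1) :
    ∃ z ∈ C, T z = z := by
  simp only [← dist_eq_norm, comap_norm_atTop, ← lipschitzOnWith_one_iff_dist_le] at hFPP hTne hAC
  exact fixedPoint_of_asymptotically_contractive_fpp_general hCcl hCcv hFPP hTC hTne hAC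
end

section
/- Let C = [1, ∞) ⊂ ℝ and define T : C → C by Tx = x − log x. Then T is a nonexpansive mapping on C, T satisfies condition (C3), and T does not satisfy condition (C1). -/
/-!
Everything is read off from the displacement `x - T x`, which here is `log x`. When `x ≤ y` and
`T x ≤ T y`, passing from `x, y` to `T x, T y` shortens the distance by exactly the increase of the
displacement. For the logarithm this increase is nonnegative and unbounded, whence nonexpansiveness
and (C3). On the other hand a contraction by a factor `r < 1` far away from `x₁` forces the
displacement to grow at least linearly, whereas `log y = o(y)`.
-/

open Asymptotics Bornology Filter Set

lemma cobounded_inf_principal_le_atTop {α : Type*} [LinearOrder α] [Bornology α]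
    [IsOrderBornology α] {s : Set α} (hs : BddBelow s) : cobounded α ⊓ 𝓟 s ≤ atTop := by
  refine le_iInf fun b => le_principal_iff.2 (mem_inf_principal.2 ?_)
  have bounded_below_b : IsBounded (s ∩ Iio b) := hs.isBounded_inter bddAbove_Iio
  filter_upwards [isBounded_def.1 bounded_below_b] with y hy hys
  exact not_lt.1 fun hyb => hy ⟨hys, hyb⟩

section Conditions

variable {E : Type*} [SeminormedAddCommGroup E]

/-- Condition (C1): from every point of `C`, the map `T` contracts the distance to all sufficiently
remote points of `C`, by a factor that does not depend on the base point. -/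
def ConditionC1 (T : E → E) (C : Set E) : Prop :=
  ∃ r ∈ Ioo (0 : ℝ) 1, ∀ x₁ ∈ C, ∃ η > (0 : ℝ),
    ∀ y ∈ C, η < ‖y‖ → ‖T x₁ - T y‖ ≤ r * ‖x₁ - y‖

/-- Condition (C3): from every point of `C`, the map `T` shortens the distance to all sufficiently
remote points of `C` by any prescribed amount. -/
def ConditionC3 (T : E → E) (C : Set E) : Prop :=
  ∀ lam > (0 : ℝ), ∀ x₁ ∈ C, ∃ η > (0 : ℝ),
    ∀ y ∈ C, η < ‖y‖ → ‖T x₁ - T y‖ ≤ ‖x₁ - y‖ - lam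

lemma eventually_cobounded_inf_principal_iff {C : Set E} {p : E → Prop} :
    (∀ᶠ y in cobounded E ⊓ 𝓟 C, p y) ↔ ∃ η > (0 : ℝ), ∀ y ∈ C, η < ‖y‖ → p y := by
  rw [eventually_inf_principal, ← comap_norm_atTop,
    ((atTop_basis_Ioi' (0 : ℝ)).comap norm).eventually_iff]
  simp only [mem_preimage, mem_Ioi]
  exact exists_congr fun η => and_congr_right fun _ => forall_congr' fun y => forall_comm

theorem not_conditionC1_of_displacement_isLittleO {T : E → E} {C : Set E} (hC : ¬IsBounded C)
    (hT : (fun x => x - T x) =o[cobounded E ⊓ 𝓟 C] (id : E → E)) : ¬ConditionC1 T C := by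
  rintro ⟨r, ⟨-, hr⟩, hcontr⟩
  have : (cobounded E ⊓ 𝓟 C).NeBot := by
    rwa [neBot_iff, Ne, inf_principal_eq_bot, ← isBounded_def]
  obtain ⟨x₁, hx₁⟩ := nonempty_of_not_isBounded hC
  have eventually_contr : ∀ᶠ y in cobounded E ⊓ 𝓟 C, ‖T x₁ - T y‖ ≤ r * ‖x₁ - y‖ :=
    eventually_cobounded_inf_principal_iff.2 (hcontr x₁ hx₁)
  have eventually_small : ∀ᶠ y in cobounded E ⊓ 𝓟 C, ‖y - T y‖ ≤ (1 - r) / 2 * ‖y‖ :=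
    hT.bound (by linarith)
  have eventually_large : ∀ᶠ y in cobounded E ⊓ 𝓟 C,
      ‖x₁ - T x₁‖ + (1 - r) * ‖x₁‖ < (1 - r) / 2 * ‖y‖ :=
    ((tendsto_norm_cobounded_atTop.mono_left inf_le_left).const_mul_atTop
      (by linarith)).eventually_gt_atTop _
  obtain ⟨y, contr, small, large⟩ :=
    (eventually_contr.and (eventually_small.and eventually_large)).exists
  have triangle : ‖x₁ - y‖ ≤ ‖x₁ - T x₁‖ + ‖T x₁ - T y‖ + ‖y - T y‖ := by
    simpa only [dist_eq_norm, norm_sub_rev (T y) y] using dist_triangle4 x₁ (T x₁) (T y) y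
  have far : (1 - r) * (‖y‖ - ‖x₁‖) ≤ (1 - r) * ‖x₁ - y‖ :=
    mul_le_mul_of_nonneg_left (norm_sub_rev x₁ y ▸ norm_sub_norm_le y x₁) (by linarith)
  linarith

end Conditions

section RealLine

variable {T : ℝ → ℝ} {s : Set ℝ}

lemma norm_sub_eq_norm_sub_sub_displacement {x y : ℝ} (hxy : x ≤ y) (hT : T x ≤ T y) :
    ‖T x - T y‖ = ‖x - y‖ - ((y - T y) - (x - T x)) := by
  rw [Real.norm_of_nonpos (sub_nonpos.2 hT), Real.norm_of_nonpos (sub_nonpos.2 hxy)]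
  ring

theorem lipschitzOnWith_one_of_monotoneOn_displacement (hT : MonotoneOn T s)
    (hdisp : MonotoneOn (fun x => x - T x) s) : LipschitzOnWith 1 T s := by
  refine LipschitzOnWith.mk_one fun x hx y hy => ?_
  wlog hxy : x ≤ y generalizing x y
  · simpa only [dist_comm] using this y hy x hx (le_of_not_ge hxy)
  rw [dist_eq_norm, dist_eq_norm, norm_sub_eq_norm_sub_sub_displacement hxy (hT hx hy hxy)]
  exact sub_le_self _ (sub_nonneg.2 (hdisp hx hy hxy))

theorem conditionC3_of_tendsto_displacement (hs : BddBelow s) (hT : MonotoneOn T s)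
    (hdisp : Tendsto (fun x => x - T x) (atTop ⊓ 𝓟 s) atTop) : ConditionC3 T s := by
  intro lam _ x₁ hx₁
  have le_atTop : cobounded ℝ ⊓ 𝓟 s ≤ atTop ⊓ 𝓟 s :=
    le_inf (cobounded_inf_principal_le_atTop hs) inf_le_right
  refine eventually_cobounded_inf_principal_iff.1 (le_atTop ?_)
  filter_upwards [hdisp.eventually_ge_atTop (x₁ - T x₁ + lam),
    mem_inf_of_left (eventually_ge_atTop x₁), mem_inf_of_right (mem_principal_self s)]
    with y gain hxy hy
  rw [norm_sub_eq_norm_sub_sub_displacement hxy (hT hx₁ hy hxy)]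
  linarith

end RealLine

lemma log_sub_log_le_sub_div {x y : ℝ} (hx : 0 < x) (hy : 0 < y) :
    Real.log y - Real.log x ≤ (y - x) / x :=
  calc Real.log y - Real.log x = Real.log (y / x) := (Real.log_div hy.ne' hx.ne').symm
    _ ≤ y / x - 1 := Real.log_le_sub_one_of_pos (div_pos hy hx)
    _ = (y - x) / x := div_sub_one hx.ne'

lemma monotoneOn_sub_log : MonotoneOn (fun x => x - Real.log x) (Ici 1) := by
  intro x hx y hy hxy
  have log_increment : Real.log y - Real.log x ≤ y - x :=
    (log_sub_log_le_sub_div (one_pos.trans_le hx) (one_pos.trans_le hy)).trans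
      (div_le_self (sub_nonneg.2 hxy) hx)
  dsimp only
  linarith

lemma mapsTo_sub_log_Ici : MapsTo (fun x => x - Real.log x) (Ici 1) (Ici 1) := by
  simpa only [Real.log_one, sub_zero] using monotoneOn_sub_log.mapsTo_Ici

lemma lipschitzOnWith_sub_log : LipschitzOnWith 1 (fun x => x - Real.log x) (Ici 1) := by
  refine lipschitzOnWith_one_of_monotoneOn_displacement monotoneOn_sub_log ?_
  simp only [sub_sub_cancel]
  exact Real.strictMonoOn_log.monotoneOn.mono (Ici_subset_Ioi.2 one_pos)

lemma conditionC3_sub_log : ConditionC3 (fun x => x - Real.log x) (Ici 1) := by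
  refine conditionC3_of_tendsto_displacement bddBelow_Ici monotoneOn_sub_log ?_
  simp only [sub_sub_cancel]
  exact Real.tendsto_log_atTop.mono_left inf_le_left

lemma not_conditionC1_sub_log : ¬ConditionC1 (fun x => x - Real.log x) (Ici 1) := by
  refine not_conditionC1_of_displacement_isLittleO
    (fun h => not_bddAbove_Ici (1 : ℝ) h.bddAbove) ?_
  simp only [sub_sub_cancel]
  exact Real.isLittleO_log_id_atTop.mono (cobounded_inf_principal_le_atTop bddBelow_Ici)

/-- Example 1: on `C = [1, ∞) ⊆ ℝ`, the map `T x = x − log x` is nonexpansive,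
satisfies (C3), and does not satisfy (C1). -/
theorem example_log_c3_not_c1 :
    letI C : Set ℝ := Set.Ici 1
    letI T : ℝ → ℝ := fun x => x - Real.log x
    Set.MapsTo T C C ∧
    (∀ x ∈ C, ∀ y ∈ C, ‖T x - T y‖ ≤ ‖x - y‖) ∧
    (∀ lam > (0 : ℝ), ∀ x₁ ∈ C, ∃ η > (0 : ℝ),
      ∀ y ∈ C, η < ‖y‖ → ‖T x₁ - T y‖ ≤ ‖x₁ - y‖ - lam) ∧
    ¬ (∃ r ∈ Set.Ioo (0 : ℝ) 1, ∀ x₁ ∈ C, ∃ η > (0 : ℝ),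
      ∀ y ∈ C, η < ‖y‖ → ‖T x₁ - T y‖ ≤ r * ‖x₁ - y‖) := by
  refine ⟨mapsTo_sub_log_Ici, fun x hx y hy => ?_, conditionC3_sub_log, not_conditionC1_sub_log⟩
  simpa only [NNReal.coe_one, one_mul] using lipschitzOnWith_sub_log.norm_sub_le hx hy
end
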